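/- Let G = A * B be a free product, and let φ : H → G be an injective group homomorphism from a group H that is freely indecomposable and not infinite cyclic. Then φ(H) is contained in g·A·g⁻¹ or in g·B·g⁻¹ for some g ∈ G. -/

import Mathlib

universe u

/-- A group `H` is *freely indecomposable* if it is nontrivial and not isomorphic to a free
product of two nontrivial groups. -/
def FreelyIndecomposable (H : Type u) [Group H] : Prop :=
  Nontrivial H ∧ ∀ (A B : Type u) [Group A] [Group B],
    Nontrivial A → Nontrivial B → IsEmpty (H ≃* Monoid.Coprod A B)

namespace Monoid.CoprodI

variable {ι : Type*} {G : ι → Type*} [∀ i, Group (G i)] {X : Type*} [MulAction (CoprodI G) X]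

/-- A cocycle on each factor of a free product extends to a cocycle on the free product. -/
theorem exists_cocycle {K : Type*} [Group K] (c : ∀ i, G i → X → K)
    (hc : ∀ i a b x, c i (a * b) x = c i a (of b • x) * c i b x) :
    ∃ C : CoprodI G → X → K, (∀ g h x, C (g * h) x = C g (h • x) * C h x) ∧
      ∀ i a x, C (of (i := i) a) x = c i a x := by
  have hone : ∀ i x, c i 1 x = 1 := fun i x => by simpa using hc i 1 1 x
  let F (i : ι) : G i →* Function.End (X × K) :=
    { toFun a p := (of a • p.1, c i a p.1 * p.2)
      map_one' := by funext p; simp [hone, Function.End.one_def]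
      map_mul' a b := by
        funext p
        simp only [hc, map_mul, mul_smul, mul_assoc]
        rfl }
  let Φ : CoprodI G →* Function.End (X × K) := lift F
  have hof : ∀ i (a : G i) p, Φ (of a) p = (of a • p.1, c i a p.1 * p.2) := fun i a p => by
    simp only [Φ, lift_of]
    rfl
  have hmul : ∀ g h p, Φ (g * h) p = Φ g (Φ h p) := fun g h p => by
    rw [map_mul]; rfl
  have key : ∀ g x k, Φ g (x, k) = (g • x, (Φ g (x, 1)).2 * k) := by
    intro g
    induction g using CoprodI.induction_on with
    | one => intro x k; simp [Function.End.one_def]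
    | of i a => intro x k; simp [hof]
    | mul g h hg hh =>
      intro x k
      rw [hmul, hmul, hh x k, hh x 1, hg, hg _ ((Φ h (x, 1)).2 * 1)]
      simp [mul_smul, mul_assoc]
  refine ⟨fun g x => (Φ g (x, 1)).2, fun g h x => ?_, fun i a x => by simp [hof]⟩
  simp only [hmul]
  rw [key h x 1, key g, mul_one]

variable (G) in
/-- Representatives and transporters for the orbits of the free factors, adapted to a rooted
spanning tree of the graph of orbits. -/
structure KuroshSystem (x₀ : X) where
  /-- The representative of the orbit of a point under a factor. -/
  rep : ι → X → X
  /-- An element of the factor moving the representative to the point. -/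
  trans : ∀ i, X → G i
  /-- An element moving the root to the point, read off the spanning tree. -/
  path : X → CoprodI G
  /-- The height in the spanning tree. -/
  height : X → ℕ
  trans_smul : ∀ i x, of (trans i x) • rep i x = x
  rep_smul : ∀ i (a : G i) x, rep i (of a • x) = rep i x
  trans_rep : ∀ i x, trans i (rep i x) = 1
  path_root : path x₀ = 1
  exists_parent : ∀ x ≠ x₀, ∃ i, height (rep i x) < height x ∧
    path x = of (trans i x) * path (rep i x)

theorem exists_list_prod_eq (g : CoprodI G) :
    ∃ l : List (Σ i, G i), (l.map fun p => of p.2).prod = g := by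
  classical
  exact ⟨(Word.equiv g).toList, Word.equiv.symm_apply_apply g⟩

theorem exists_height [MulAction.IsPretransitive (CoprodI G) X] (x₀ : X) :
    ∃ d : X → ℕ, ∀ x ≠ x₀, ∃ i, ∃ a : G i, d (of a • x) < d x := by
  have hne : ∀ x, ∃ n, ∃ l : List (Σ i, G i),
      l.length = n ∧ (l.map fun p => of p.2).prod • x₀ = x := by
    intro x
    obtain ⟨g, rfl⟩ := MulAction.exists_smul_eq (CoprodI G) x₀ x
    obtain ⟨l, rfl⟩ := exists_list_prod_eq g
    exact ⟨_, l, rfl, rfl⟩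
  classical
  refine ⟨fun x => Nat.find (hne x), fun x hx => ?_⟩
  obtain ⟨l, hl, hlx⟩ := Nat.find_spec (hne x)
  cases l with
  | nil => exact absurd (by simpa using hlx.symm) hx
  | cons p l =>
    refine ⟨p.1, p.2⁻¹, ?_⟩
    dsimp only
    rw [← hl, Nat.find_lt_iff]
    refine ⟨l.length, by simp, l, rfl, ?_⟩
    rw [← hlx]
    simp [mul_smul]

theorem nonempty_kuroshSystem [MulAction.IsPretransitive (CoprodI G) X] (x₀ : X) :
    Nonempty (KuroshSystem G x₀) := by
  classical
  obtain ⟨d, hd⟩ := exists_height (G := G) x₀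
  have hmin : ∀ S : Set X, ∃ m, S.Nonempty → m ∈ S ∧ ∀ y ∈ S, d m ≤ d y := by
    intro S
    by_cases h : S.Nonempty
    · obtain ⟨m, hm, hm'⟩ := WellFounded.has_min (measure d).wf S h
      exact ⟨m, fun _ => ⟨hm, fun y hy => not_lt.1 (hm' y hy)⟩⟩
    · exact ⟨x₀, fun h' => absurd h' h⟩
  choose m hm using hmin
  let orb (i : ι) (x : X) : Set X := {y | ∃ a : G i, of a • y = x}
  have horb : ∀ i (a : G i) x, orb i (of a • x) = orb i x := by
    intro i a x
    ext y
    constructor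
    · rintro ⟨b, hb⟩
      exact ⟨a⁻¹ * b, by simp [mul_smul, hb]⟩
    · rintro ⟨b, hb⟩
      exact ⟨a * b, by simp [mul_smul, hb]⟩
  have hself : ∀ i x, x ∈ orb i x := fun i x => ⟨1, by simp⟩
  let r (i : ι) (x : X) : X := m (orb i x)
  have hr : ∀ i (a : G i) x, r i (of a • x) = r i x := fun i a x => by simp only [r, horb]
  have ht : ∀ i x, ∃ a : G i, of a • r i x = x ∧ (r i x = x → a = 1) := by
    intro i x
    by_cases h : r i x = x
    · exact ⟨1, by simp [h], fun _ => rfl⟩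
    · obtain ⟨a, ha⟩ := (hm _ ⟨x, hself i x⟩).1
      exact ⟨a, ha, fun h' => absurd h' h⟩
  choose t ht ht' using ht
  have hrr : ∀ i x, r i (r i x) = r i x := fun i x => by
    conv_rhs => rw [← ht i x, hr]
  have hpar : ∀ x, x ≠ x₀ → ∃ i, d (r i x) < d x := by
    intro x hx
    obtain ⟨i, a, ha⟩ := hd x hx
    exact ⟨i, ((hm _ ⟨x, hself i x⟩).2 _ ⟨a⁻¹, by simp⟩).trans_lt ha⟩
  choose par hpar using hpar
  let s : X → CoprodI G := (measure d).wf.fix fun x ih =>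
    if h : x = x₀ then 1 else of (t (par x h) x) * ih (r (par x h) x) (hpar x h)
  refine ⟨⟨r, t, s, d, ht, hr, fun i x => ht' _ _ (hrr i x), ?_,
    fun x hx => ⟨par x hx, hpar x hx, ?_⟩⟩⟩
  · simp only [s]; rw [WellFounded.fix_eq]; simp
  · simp only [s]; rw [WellFounded.fix_eq]; simp [hx]

namespace KuroshSystem

variable {x₀ : X} (σ : KuroshSystem G x₀)

theorem rep_rep (i : ι) (x : X) : σ.rep i (σ.rep i x) = σ.rep i x := by
  conv_rhs => rw [← σ.trans_smul i x, σ.rep_smul]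

theorem path_smul (x : X) : σ.path x • x₀ = x := by
  induction h : σ.height x using Nat.strong_induction_on generalizing x with
  | _ n ih =>
    by_cases hx : x = x₀
    · rw [hx, σ.path_root, one_smul]
    · obtain ⟨i, hi, hp⟩ := σ.exists_parent x hx
      rw [hp, mul_smul, ih _ (h ▸ hi) _ rfl, σ.trans_smul]

/-- The edges outside the spanning tree. -/
abbrev Edge : Type _ :=
  {e : ι × X // σ.path e.2 ≠ of (σ.trans e.1 e.2) * σ.path (σ.rep e.1 e.2)}

/-- The orbits of the factors, given by their representatives. -/
abbrev Vertex : Type _ :=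
  {v : ι × X // σ.rep v.1 v.2 = v.2}

/-- The stabilizer of an orbit representative in the corresponding factor. -/
def vertexGroup (v : σ.Vertex) : Subgroup (G v.1.1) :=
  (MulAction.stabilizer (CoprodI G) v.1.2).comap of

/-- The free product of the vertex groups and the free group on the edges outside the tree. -/
abbrev FreeProd : Type _ :=
  Monoid.Coprod (FreeGroup σ.Edge) (CoprodI fun v => σ.vertexGroup v)

/-- The image of a vertex group in the stabilizer of the root. -/
def vertexHom (v : σ.Vertex) : σ.vertexGroup v →* MulAction.stabilizer (CoprodI G) x₀ :=
  (((MulAut.conj (σ.path v.1.2)⁻¹).toMonoidHom.comp of).comp (σ.vertexGroup v).subtype).codRestrict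
    _ fun a => by
      have ha : of (a : G v.1.1) • v.1.2 = v.1.2 := a.2
      simp [MulAction.mem_stabilizer_iff, mul_smul, path_smul, ha, inv_smul_eq_iff]

theorem coe_vertexHom (v : σ.Vertex) (a : σ.vertexGroup v) :
    (σ.vertexHom v a : CoprodI G) = (σ.path v.1.2)⁻¹ * of (a : G v.1.1) * σ.path v.1.2 := by
  simp [vertexHom]

/-- The loop at the root through a given edge. -/
def loop (i : ι) (x : X) : MulAction.stabilizer (CoprodI G) x₀ :=
  ⟨(σ.path (σ.rep i x))⁻¹ * (of (σ.trans i x))⁻¹ * σ.path x, by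
    have h := σ.trans_smul i x
    rw [← eq_inv_smul_iff] at h
    rw [MulAction.mem_stabilizer_iff, mul_smul, mul_smul, path_smul, ← h, inv_smul_eq_iff,
      path_smul]⟩

/-- The canonical map from the free product to the stabilizer of the root. -/
def toStabilizer : σ.FreeProd →* MulAction.stabilizer (CoprodI G) x₀ :=
  Monoid.Coprod.lift (FreeGroup.lift fun e => σ.loop e.1.1 e.1.2) (CoprodI.lift σ.vertexHom)

open Classical in
/-- The value of the universal cocycle along an edge. -/
noncomputable def edgeValue (i : ι) (x : X) : σ.FreeProd :=
  if h : σ.path x = of (σ.trans i x) * σ.path (σ.rep i x) then 1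
  else Monoid.Coprod.inl (FreeGroup.of ⟨(i, x), h⟩)

theorem edgeValue_rep (i : ι) (x : X) : σ.edgeValue i (σ.rep i x) = 1 := by
  simp [edgeValue, σ.trans_rep, σ.rep_rep]

theorem toStabilizer_edgeValue (i : ι) (x : X) :
    σ.toStabilizer (σ.edgeValue i x) = σ.loop i x := by
  by_cases h : σ.path x = of (σ.trans i x) * σ.path (σ.rep i x)
  · ext
    simp [edgeValue, loop, h, mul_assoc]
  · rw [edgeValue, dif_neg h, toStabilizer, Monoid.Coprod.lift_apply_inl, FreeGroup.lift_apply_of]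

open Classical in
/-- The value of the universal cocycle on an element of a factor fixing the representative of
the orbit of `x`. -/
noncomputable def vertexValue (i : ι) (x : X) (a : G i) : σ.FreeProd :=
  if h : of a • x = x ∧ σ.rep i x = x then
    Monoid.Coprod.inr (of (M := fun v : σ.Vertex => σ.vertexGroup v) (i := ⟨(i, x), h.2⟩) ⟨a, h.1⟩)
  else 1

theorem vertexValue_mul {i : ι} {x : X} (hx : σ.rep i x = x) {a b : G i}
    (ha : of a • x = x) (hb : of b • x = x) :
    σ.vertexValue i x (a * b) = σ.vertexValue i x a * σ.vertexValue i x b := by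
  have hab : of (a * b) • x = x := by rw [map_mul, mul_smul, hb, ha]
  rw [vertexValue, vertexValue, vertexValue, dif_pos ⟨hab, hx⟩, dif_pos ⟨ha, hx⟩,
    dif_pos ⟨hb, hx⟩, ← map_mul, ← map_mul]
  rfl

theorem toStabilizer_vertexValue {i : ι} {x : X} (hx : σ.rep i x = x) {a : G i}
    (ha : of a • x = x) :
    (σ.toStabilizer (σ.vertexValue i x a) : CoprodI G) =
      (σ.path x)⁻¹ * of a * σ.path x := by
  rw [vertexValue, dif_pos ⟨ha, hx⟩, toStabilizer, Monoid.Coprod.lift_apply_inr, lift_of,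
    coe_vertexHom]

theorem trans_conj_smul (i : ι) (a : G i) (x : X) :
    of ((σ.trans i (of a • x))⁻¹ * a * σ.trans i x) • σ.rep i x = σ.rep i x := by
  rw [map_mul, map_mul, mul_smul, mul_smul, σ.trans_smul, map_inv, inv_smul_eq_iff]
  conv_rhs => rw [← σ.rep_smul i a x, σ.trans_smul]

theorem exists_universal_cocycle : ∃ C : CoprodI G → X → σ.FreeProd,
    (∀ g h x, C (g * h) x = C g (h • x) * C h x) ∧
    ∀ i a x, C (of (i := i) a) x = (σ.edgeValue i (of a • x))⁻¹ *
      σ.vertexValue i (σ.rep i x) ((σ.trans i (of a • x))⁻¹ * a * σ.trans i x) *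
      σ.edgeValue i x := by
  refine exists_cocycle _ fun i a b x => ?_
  have h₁ := σ.trans_conj_smul i a (of b • x)
  rw [σ.rep_smul] at h₁
  have := σ.vertexValue_mul (σ.rep_rep i x) h₁ (σ.trans_conj_smul i b x)
  simp only [σ.rep_smul, map_mul, mul_smul]
  rw [show (σ.trans i (of a • of b • x))⁻¹ * (a * b) * σ.trans i x =
    (σ.trans i (of a • of b • x))⁻¹ * a * σ.trans i (of b • x) *
    ((σ.trans i (of b • x))⁻¹ * b * σ.trans i x) by group, this]
  group

theorem bijective_toStabilizer : Function.Bijective σ.toStabilizer := by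
  obtain ⟨C, hmul, hof⟩ := σ.exists_universal_cocycle
  have hone : ∀ x, C 1 x = 1 := fun x => by simpa using hmul 1 1 x
  have hinv : ∀ g x, C g⁻¹ (g • x) = (C g x)⁻¹ := fun g x => by
    rw [eq_inv_iff_mul_eq_one, ← hmul, inv_mul_cancel, hone]
  have hright : ∀ g x, (σ.toStabilizer (C g x) : CoprodI G) =
      (σ.path (g • x))⁻¹ * g * σ.path x := by
    intro g
    induction g using CoprodI.induction_on with
    | one => intro x; simp [hone]
    | of i a =>
      intro x
      rw [hof, map_mul, map_mul, map_inv, Subgroup.coe_mul, Subgroup.coe_mul, Subgroup.coe_inv,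
        σ.toStabilizer_vertexValue (σ.rep_rep i x) (σ.trans_conj_smul i a x),
        toStabilizer_edgeValue, toStabilizer_edgeValue]
      simp only [loop, σ.rep_smul, map_mul, map_inv]
      group
    | mul g h hg hh =>
      intro x
      rw [hmul, map_mul, Subgroup.coe_mul, hg, hh, mul_smul]
      group
  have htrans : ∀ i x, C (of (σ.trans i x)) (σ.rep i x) = (σ.edgeValue i x)⁻¹ := by
    intro i x
    have h1 : σ.vertexValue i (σ.rep i x) 1 = 1 := by
      simpa using σ.vertexValue_mul (σ.rep_rep i x) (a := 1) (b := 1) (by simp) (by simp)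
    rw [hof, σ.trans_smul, σ.rep_rep, σ.trans_rep, edgeValue_rep]
    simp [h1]
  have hpath : ∀ x, C (σ.path x) x₀ = 1 := by
    intro x
    induction h : σ.height x using Nat.strong_induction_on generalizing x with
    | _ n ih =>
      by_cases hx : x = x₀
      · rw [hx, σ.path_root, hone]
      · obtain ⟨i, hi, hp⟩ := σ.exists_parent x hx
        rw [hp, hmul, ih _ (h ▸ hi) _ rfl, σ.path_smul, htrans]
        simp [edgeValue, hp]
  have hpath' : ∀ x, C (σ.path x)⁻¹ x = 1 := fun x => by
    have := hinv (σ.path x) x₀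
    rwa [path_smul, hpath, inv_one] at this
  let ρ : MulAction.stabilizer (CoprodI G) x₀ →* σ.FreeProd :=
    { toFun g := C g x₀
      map_one' := hone _
      map_mul' g h := by
        have hh : (h : CoprodI G) • x₀ = x₀ := h.2
        rw [Subgroup.coe_mul, hmul, hh] }
  have hleft : ρ.comp σ.toStabilizer = MonoidHom.id _ := by
    refine Monoid.Coprod.hom_ext (FreeGroup.ext_hom _ _ fun e => ?_)
      (CoprodI.ext_hom _ _ fun v => ?_)
    · have : C (σ.loop e.1.1 e.1.2) x₀ = σ.edgeValue e.1.1 e.1.2 := by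
        have h := hinv (of (σ.trans e.1.1 e.1.2)) (σ.rep e.1.1 e.1.2)
        rw [σ.trans_smul] at h
        have h' : (of (σ.trans e.1.1 e.1.2))⁻¹ • e.1.2 = σ.rep e.1.1 e.1.2 := by
          rw [inv_smul_eq_iff, σ.trans_smul]
        simp only [loop]
        rw [hmul, hmul, hpath, path_smul, h, h', hpath', htrans]
        simp
      have he := e.2
      simp only [MonoidHom.comp_apply, toStabilizer, Monoid.Coprod.lift_apply_inl,
        FreeGroup.lift_apply_of, MonoidHom.id_apply]
      refine this.trans ?_
      rw [edgeValue, dif_neg he]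
    · ext a
      have ha : of (a : G v.1.1) • v.1.2 = v.1.2 := a.2
      have hv : σ.rep v.1.1 v.1.2 = v.1.2 := v.2
      have ht : σ.trans v.1.1 v.1.2 = 1 := by rw [← hv, σ.trans_rep]
      have hE : σ.edgeValue v.1.1 v.1.2 = 1 := by rw [← hv, edgeValue_rep]
      have : C (σ.vertexHom v a) x₀ = σ.vertexValue v.1.1 v.1.2 a := by
        rw [coe_vertexHom, hmul, hmul, hpath, path_smul, ha, hpath', hof, ha, hv, ht, hE]
        simp
      simp only [MonoidHom.comp_apply, toStabilizer, Monoid.Coprod.lift_apply_inr,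
        lift_of, MonoidHom.id_apply]
      refine this.trans ?_
      rw [vertexValue, dif_pos ⟨ha, hv⟩]
  refine ⟨Function.LeftInverse.injective (g := ρ) (DFunLike.congr_fun hleft), fun g => ⟨C g x₀, ?_⟩⟩
  have hg : (g : CoprodI G) • x₀ = x₀ := g.2
  ext
  rw [hright, hg, σ.path_root]
  simp

end KuroshSystem

end Monoid.CoprodI

namespace Monoid

/-- A free product splits along a partition of the index type. -/
noncomputable def CoprodI.splitEquiv {J : Type*} {S : J → Type*} [∀ j, Group (S j)]
    (p : J → Prop) [DecidablePred p] :
    CoprodI S ≃* Coprod (CoprodI fun j : {j // p j} => S j) (CoprodI fun j : {j // ¬p j} => S j) :=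
  MonoidHom.toMulEquiv
    (CoprodI.lift fun j =>
      if h : p j then Coprod.inl.comp (CoprodI.of (M := fun j : {j // p j} => S j) (i := ⟨j, h⟩))
      else Coprod.inr.comp (CoprodI.of (M := fun j : {j // ¬p j} => S j) (i := ⟨j, h⟩)))
    (Coprod.lift (CoprodI.lift fun j => CoprodI.of) (CoprodI.lift fun j => CoprodI.of))
    (by
      refine CoprodI.ext_hom _ _ fun j => ?_
      ext a
      by_cases h : p j <;> simp [h])
    (by
      refine Coprod.hom_ext (CoprodI.ext_hom _ _ fun j => ?_) (CoprodI.ext_hom _ _ fun j => ?_) <;>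
      · ext a
        simp [j.2])

end Monoid

/-- A free group splits along a partition of the set of generators. -/
noncomputable def FreeGroup.splitEquiv {E : Type*} (p : E → Prop) [DecidablePred p] :
    FreeGroup E ≃* Monoid.Coprod (FreeGroup {e // p e}) (FreeGroup {e // ¬p e}) :=
  MonoidHom.toMulEquiv
    (FreeGroup.lift fun e => if h : p e then Monoid.Coprod.inl (FreeGroup.of ⟨e, h⟩)
      else Monoid.Coprod.inr (FreeGroup.of ⟨e, h⟩))
    (Monoid.Coprod.lift (FreeGroup.lift fun e => FreeGroup.of e.1)
      (FreeGroup.lift fun e => FreeGroup.of e.1))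
    (by
      ext e
      by_cases h : p e <;> simp [h])
    (by
      refine Monoid.Coprod.hom_ext (FreeGroup.ext_hom _ _ fun e => ?_)
        (FreeGroup.ext_hom _ _ fun e => ?_) <;>
      simp [e.2])

universe v

namespace FreelyIndecomposable

open Monoid

variable {H : Type u} [Group H]

theorem subsingleton_or_subsingleton (hH : FreelyIndecomposable H) {P Q : Type u} [Group P]
    [Group Q] (e : H ≃* Coprod P Q) : Subsingleton P ∨ Subsingleton Q := by
  by_contra! h
  exact (hH.2 P Q h.1 h.2).false e

theorem exists_subsingleton_of_ne {H : Type (max u v)} [Group H] (hH : FreelyIndecomposable H)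
    {J : Type (max u v)} {S : J → Type u} [∀ j, Group (S j)] (e : H ≃* CoprodI S) :
    ∃ j, ∀ k ≠ j, Subsingleton (S k) := by
  classical
  by_contra! h
  have hS : ∀ j, Subsingleton (S j) := by
    intro j
    rcases hH.subsingleton_or_subsingleton (e.trans (CoprodI.splitEquiv (· = j))) with hs | hs
    · exact (CoprodI.of_injective (M := fun k : {k // k = j} => S k) ⟨j, rfl⟩).subsingleton
    · obtain ⟨k, hk, hk'⟩ := h j
      exact absurd (CoprodI.of_injective (M := fun k : {k // ¬k = j} => S k) ⟨k, hk⟩).subsingleton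
        (not_subsingleton _)
  have := hH.1
  obtain ⟨x, hx⟩ := exists_ne (1 : H)
  have hid : MonoidHom.id (CoprodI S) = 1 := CoprodI.ext_hom _ _ fun j => by
    ext a
    simp [Subsingleton.elim a 1]
  exact hx (e.injective ((DFunLike.congr_fun hid (e x)).trans (map_one e).symm))

theorem nonempty_mulEquiv_int_of_freeGroup (hH : FreelyIndecomposable H) {E : Type u}
    (e : H ≃* FreeGroup E) : Nonempty (H ≃* Multiplicative ℤ) := by
  classical
  have := hH.1
  have hE : Nonempty E := by
    by_contra! h
    exact not_subsingleton _ e.injective.subsingleton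
  obtain ⟨a⟩ := hE
  have hsub : ∀ b, b = a := by
    intro b
    by_contra hb
    rcases hH.subsingleton_or_subsingleton (e.trans (FreeGroup.splitEquiv (· = a))) with hs | hs
    · exact FreeGroup.of_ne_one (⟨a, rfl⟩ : {x // x = a}) (Subsingleton.elim _ _)
    · exact FreeGroup.of_ne_one (⟨b, hb⟩ : {x // ¬x = a}) (Subsingleton.elim _ _)
  let : Unique E := ⟨⟨a⟩, hsub⟩
  exact ⟨e.trans FreeGroup.mulEquivIntOfUnique⟩

end FreelyIndecomposable

namespace Monoid.CoprodI

theorem of_surjective_of_subsingleton {J : Type*} {S : J → Type*} [∀ j, Group (S j)] {j : J}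
    (hj : ∀ k ≠ j, Subsingleton (S k)) : Function.Surjective (of : S j →* CoprodI S) := by
  intro x
  induction x using CoprodI.induction_on with
  | one => exact ⟨1, map_one _⟩
  | of k a =>
    by_cases h : k = j
    · subst h
      exact ⟨a, rfl⟩
    · have := hj k h
      exact ⟨1, by rw [Subsingleton.elim a 1, map_one, map_one]⟩
  | mul x y hx hy =>
    obtain ⟨a, rfl⟩ := hx
    obtain ⟨b, rfl⟩ := hy
    exact ⟨a * b, map_mul _ _ _⟩

/-- A freely indecomposable subgroup of a free product that is not infinite cyclic is conjugate
into a factor. -/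
theorem range_le_conj_of_freelyIndecomposable {ι : Type v} {G : ι → Type u} [∀ i, Group (G i)]
    {H : Type (max u v)} [Group H] (hind : FreelyIndecomposable H)
    (hcyc : IsEmpty (H ≃* Multiplicative ℤ)) (φ : H →* CoprodI G) (hφ : Function.Injective φ) :
    ∃ i, ∃ g : CoprodI G,
      φ.range ≤ Subgroup.map (MulAut.conj g).toMonoidHom (of : G i →* CoprodI G).range := by
  let x₀ : CoprodI G ⧸ φ.range := ((1 : CoprodI G) : CoprodI G ⧸ φ.range)
  have hstab : φ.range = MulAction.stabilizer (CoprodI G) x₀ :=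
    (MulAction.stabilizer_quotient φ.range).symm
  obtain ⟨σ⟩ := nonempty_kuroshSystem (G := G) x₀
  let eK := MulEquiv.ofBijective σ.toStabilizer σ.bijective_toStabilizer
  let e : H ≃* σ.FreeProd :=
    ((MonoidHom.ofInjective hφ).trans (MulEquiv.subgroupCongr hstab)).trans eK.symm
  rcases hind.subsingleton_or_subsingleton e with hF | hV
  · have hinr : Function.Surjective (Coprod.inr : _ →* σ.FreeProd) := by
      intro x
      induction x using Coprod.induction_on with
      | inl a => exact ⟨1, by rw [Subsingleton.elim a 1, map_one, map_one]⟩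
      | inr a => exact ⟨a, rfl⟩
      | mul x y hx hy =>
        obtain ⟨a, rfl⟩ := hx
        obtain ⟨b, rfl⟩ := hy
        exact ⟨a * b, map_mul _ _ _⟩
    obtain ⟨v, hv⟩ := hind.exists_subsingleton_of_ne
      (e.trans (MulEquiv.ofBijective _ ⟨Coprod.inr_injective, hinr⟩).symm)
    refine ⟨v.1.1, (σ.path v.1.2)⁻¹, fun g hg => ?_⟩
    rw [hstab] at hg
    obtain ⟨y, hy⟩ := σ.bijective_toStabilizer.2 ⟨g, hg⟩
    obtain ⟨z, rfl⟩ := hinr y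
    obtain ⟨a, rfl⟩ := of_surjective_of_subsingleton hv z
    refine ⟨of (a : G v.1.1), ⟨_, rfl⟩, ?_⟩
    have h := congrArg Subtype.val hy
    rw [KuroshSystem.toStabilizer, Coprod.lift_apply_inr, lift_of, σ.coe_vertexHom] at h
    simpa using h
  · have hinl : Function.Surjective (Coprod.inl : _ →* σ.FreeProd) := by
      intro x
      induction x using Coprod.induction_on with
      | inl a => exact ⟨a, rfl⟩
      | inr a => exact ⟨1, by rw [Subsingleton.elim a 1, map_one, map_one]⟩
      | mul x y hx hy =>
        obtain ⟨a, rfl⟩ := hx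
        obtain ⟨b, rfl⟩ := hy
        exact ⟨a * b, map_mul _ _ _⟩
    obtain ⟨f⟩ := hind.nonempty_mulEquiv_int_of_freeGroup
      (e.trans (MulEquiv.ofBijective _ ⟨Coprod.inl_injective, hinl⟩).symm)
    exact hcyc.elim f

end Monoid.CoprodI

namespace Monoid.Coprod

/-- Two groups as a family indexed by `Bool`. -/
def Pair (A B : Type u) : Bool → Type u
  | true => A
  | false => B

instance (A B : Type u) [Group A] [Group B] : ∀ b, Group (Pair A B b)
  | true => inferInstanceAs (Group A)
  | false => inferInstanceAs (Group B)

variable {A B : Type u} [Group A] [Group B]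

/-- The inclusions of the factors, as a family indexed by `Bool`. -/
def pairHom : ∀ b, Pair A B b →* Coprod A B
  | true => (inl : A →* Coprod A B)
  | false => (inr : B →* Coprod A B)

/-- The binary free product as an indexed free product. -/
def equivCoprodI : Coprod A B ≃* CoprodI (Pair A B) :=
  MonoidHom.toMulEquiv
    (lift (CoprodI.of (M := Pair A B) (i := true)) (CoprodI.of (M := Pair A B) (i := false)))
    (CoprodI.lift pairHom)
    (hom_ext (MonoidHom.ext fun a => CoprodI.lift_of (i := true) pairHom a)
      (MonoidHom.ext fun b => CoprodI.lift_of (i := false) pairHom b))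
    (CoprodI.ext_hom _ _ fun b => by
      ext a
      cases b <;> simp only [MonoidHom.comp_apply, CoprodI.lift_of] <;> rfl)

theorem equivCoprodI_symm_of (b : Bool) (a : Pair A B b) :
    equivCoprodI.symm (CoprodI.of a) = pairHom b a :=
  CoprodI.lift_of pairHom a

end Monoid.Coprod

/-- Let `G = A * B` be a free product, and let `φ : H → G` be an injective group
homomorphism from a group `H` that is freely indecomposable and not infinite cyclic.  Then `φ(H)`
is contained in `g·A·g⁻¹` or in `g·B·g⁻¹` for some `g ∈ G` (Kurosh subgroup theorem). -/
theorem stmt7 {H : Type u} [Group H] {A B : Type u} [Group A] [Group B]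
    (hind : FreelyIndecomposable H)
    (hcyc : IsEmpty (H ≃* Multiplicative ℤ))
    (φ : H →* Monoid.Coprod A B) (hφ : Function.Injective φ) :
    ∃ g : Monoid.Coprod A B,
      φ.range ≤ Subgroup.map (MulAut.conj g).toMonoidHom
          (Monoid.Coprod.inl : A →* Monoid.Coprod A B).range ∨
      φ.range ≤ Subgroup.map (MulAut.conj g).toMonoidHom
          (Monoid.Coprod.inr : B →* Monoid.Coprod A B).range := by
  obtain ⟨b, g, h⟩ := Monoid.CoprodI.range_le_conj_of_freelyIndecomposable hind hcyc
    (Monoid.Coprod.equivCoprodI.toMonoidHom.comp φ) (Monoid.Coprod.equivCoprodI.injective.comp hφ)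
  have key : φ.range ≤ Subgroup.map
      (MulAut.conj (Monoid.Coprod.equivCoprodI.symm g)).toMonoidHom
      (Monoid.Coprod.pairHom (A := A) (B := B) b).range := by
    rintro _ ⟨x, rfl⟩
    obtain ⟨_, ⟨a, rfl⟩, ha⟩ := h ⟨x, rfl⟩
    refine ⟨_, ⟨a, rfl⟩, ?_⟩
    have := congrArg Monoid.Coprod.equivCoprodI.symm ha
    simpa [Monoid.Coprod.equivCoprodI_symm_of] using this
  refine ⟨Monoid.Coprod.equivCoprodI.symm g, ?_⟩
  cases b
  · exact Or.inr key
  · exact Or.inl key
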